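/- Lozanovskii factorization for Hardy spaces / product theorem: Let X, Y be rearrangement-invariant Banach function spaces over 𝕋 with X⊙Y ⊂ L^1. Then H[X]⊙H[Y] = H[X⊙Y] with equality of (quasi-)norms, where the product of the Hardy spaces is {fg : f ∈ H[X], g ∈ H[Y]} with ‖h‖ = inf{‖f‖_{H[X]}‖g‖_{H[Y]} : h = fg}. -/

import Mathlib

open MeasureTheory Filter Topology ComplexConjugate
open scoped ENNReal

noncomputable section

instance fact_two_pi_pos : Fact (0 < 2 * Real.pi) := ⟨by positivity⟩

/-- The unit circle, modelled additively as `ℝ / 2πℤ`. -/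
abbrev 𝕋 := AddCircle (2 * Real.pi)

/-- Normalized Lebesgue (Haar) measure on the circle. -/
def μ : Measure 𝕋 := AddCircle.haarAddCircle

/-- A (quasi-)norm functional on measurable functions on the circle, with values in `ℝ≥0∞`. -/
abbrev NormFn := (𝕋 → ℂ) → ℝ≥0∞

/-- Membership in the function space determined by the norm functional `N`. -/
def MemN (N : NormFn) (f : 𝕋 → ℂ) : Prop :=
  AEStronglyMeasurable f μ ∧ N f < ⊤

/-- The closed unit ball of the space determined by `N`. -/
def unitBall (N : NormFn) : Set (𝕋 → ℂ) :=
  {f | AEStronglyMeasurable f μ ∧ N f ≤ 1}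

/-- The Köthe dual (associate space) norm of `N`. -/
def kdualN (N : NormFn) : NormFn := fun g =>
  ⨆ f : unitBall N, ∫⁻ t, (‖f.1 t * g t‖₊ : ℝ≥0∞) ∂μ

/-- The norm of the space `M(X,Y)` of pointwise multipliers, i.e. the operator norm of
multiplication by `a` from the space of `NX` to the space of `NY`. -/
def multN (NX NY : NormFn) : NormFn := fun a =>
  ⨆ f : unitBall NX, NY (fun t => a t * f.1 t)

/-- The norm of the pointwise product space `X ⊙ Y`. -/
def prodN (NX NY : NormFn) : NormFn := fun h =>
  ⨅ p : {p : (𝕋 → ℂ) × (𝕋 → ℂ) //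
      AEStronglyMeasurable p.1 μ ∧ AEStronglyMeasurable p.2 μ ∧
      h =ᵐ[μ] fun t => p.1 t * p.2 t},
    NX p.1.1 * NY p.1.2

/-- Membership in the Hardy space `H[X]`: membership in `X` together with the vanishing of all
negative Fourier coefficients. -/
def HardyMemN (N : NormFn) (f : 𝕋 → ℂ) : Prop :=
  AEStronglyMeasurable f μ ∧ N f < ⊤ ∧ ∀ n : ℤ, n < 0 → fourierCoeff f n = 0

/-- Operator norm of `T` from the space of `N1` to that of `N2`. -/
def opN (N1 N2 : NormFn) (T : (𝕋 → ℂ) → (𝕋 → ℂ)) : ℝ≥0∞ :=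
  ⨆ f : unitBall N1, N2 (T f.1)

/-- Operator norm of `T` restricted to the Hardy space of `N1`, measured in `N2`. -/
def hardyOpN (N1 N2 : NormFn) (T : (𝕋 → ℂ) → (𝕋 → ℂ)) : ℝ≥0∞ :=
  ⨆ f : {f : 𝕋 → ℂ // HardyMemN N1 f ∧ N1 f ≤ 1}, N2 (T f.1)

/-- `P` is (a realization of) the Riesz projection: it respects a.e. equality and, on integrable
functions, keeps the Fourier coefficients with nonnegative index and kills the others. -/
def IsRieszProj (P : (𝕋 → ℂ) → (𝕋 → ℂ)) : Prop :=
  (∀ f g, f =ᵐ[μ] g → P f =ᵐ[μ] P g) ∧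
  (∀ f g, P (f + g) =ᵐ[μ] P f + P g) ∧
  (∀ (c : ℂ) f, P (fun t => c * f t) =ᵐ[μ] fun t => c * P f t) ∧
  (∀ f, Integrable f μ → Integrable (P f) μ ∧
    ∀ n : ℤ, fourierCoeff (P f) n = if 0 ≤ n then fourierCoeff f n else 0)

/-- The flip operator `(Jf)(t) = t⁻¹ f(t⁻¹)`, written additively on `ℝ/2πℤ`. -/
def Jflip (f : 𝕋 → ℂ) : 𝕋 → ℂ := fun x => fourier (-1) x * f (-x)

/-- The dilation operator `D_s`: `(D_s f)(e^{iθ}) = f(e^{iθs})` for `θs ∈ [0,2π)`, `0` otherwise. -/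
def dilOp (s : ℝ) (f : 𝕋 → ℂ) : 𝕋 → ℂ := fun x =>
  let θ : ℝ := (AddCircle.equivIco (2 * Real.pi) 0 x : ℝ)
  if 0 ≤ s * θ ∧ s * θ < 2 * Real.pi then f ((s * θ : ℝ) : 𝕋) else 0

/-- Operator norm of the dilation `D_s` on the space of `N`. -/
def dilNorm (N : NormFn) (s : ℝ) : ℝ≥0∞ :=
  ⨆ f : unitBall N, N (dilOp s f.1)

/-- `α` is the lower Boyd index of the space of `N`. -/
def boydLower (N : NormFn) (α : ℝ) : Prop :=
  Tendsto (fun s : ℝ => Real.log (dilNorm N (1 / s)).toReal / Real.log s) (𝓝[>] 0) (𝓝 α)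

/-- `β` is the upper Boyd index of the space of `N`. -/
def boydUpper (N : NormFn) (β : ℝ) : Prop :=
  Tendsto (fun s : ℝ => Real.log (dilNorm N (1 / s)).toReal / Real.log s) atTop (𝓝 β)

/-- The space of `N` has nontrivial Boyd indices. -/
def NontrivialBoyd (N : NormFn) : Prop :=
  ∃ α β : ℝ, 0 < α ∧ β < 1 ∧ boydLower N α ∧ boydUpper N β

/-- Trigonometric polynomials. -/
def IsTrigPoly (f : 𝕋 → ℂ) : Prop :=
  ∃ (n : ℕ) (c : ℤ → ℂ), f = fun x => ∑ k ∈ Finset.Icc (-(n : ℤ)) n, c k * fourier k x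

/-- Analytic trigonometric polynomials. -/
def IsAnalyticPoly (f : 𝕋 → ℂ) : Prop :=
  ∃ (n : ℕ) (c : ℕ → ℂ), f = fun x => ∑ k ∈ Finset.range (n + 1), c k * fourier (k : ℤ) x

/-- The Fejér kernel `K_n`. -/
def fejer (n : ℕ) : 𝕋 → ℂ := fun x =>
  ∑ k ∈ Finset.Icc (-(n : ℤ)) n, (1 - (|(k : ℝ)| / (n + 1)) : ℂ) * fourier k x

/-- Convolution with the Fejér kernel, `f * K_n`. -/
def convFejer (n : ℕ) (f : 𝕋 → ℂ) : 𝕋 → ℂ := fun x =>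
  ∫ y, f y * fejer n (x - y) ∂μ

/-- The Banach envelope norm of `N`. -/
def envN (N : NormFn) : NormFn := fun f =>
  ⨅ d : {d : Σ n : ℕ, Fin n → 𝕋 → ℂ // f =ᵐ[μ] fun t => ∑ i, d.2 i t},
    ∑ i, N (d.1.2 i)

/-- The Banach envelope norm of the Hardy space `H[Z]` (decompositions within `H[Z]`). -/
def envHardyN (N : NormFn) : NormFn := fun f =>
  ⨅ d : {d : Σ n : ℕ, Fin n → 𝕋 → ℂ //
      (∀ i, HardyMemN N (d.2 i)) ∧ f =ᵐ[μ] fun t => ∑ i, d.2 i t},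
    ∑ i, N (d.1.2 i)

/-- The norm of the 1/2-concavification `Z^{(1/2)}`: `‖f‖ = ‖|f|^{1/2}‖²`. -/
def concavHalf (N : NormFn) : NormFn := fun f =>
  (N (fun t => (Real.sqrt ‖f t‖ : ℂ))) ^ 2

/-- `dist_{M(X,Y)}(a, conj H[M(X,Y)])`: the infimum of multiplier norms of symbols `b` whose
Fourier coefficients agree with those of `a` for positive indices. -/
def hankelDist (NX NY : NormFn) (a : 𝕋 → ℂ) : ℝ≥0∞ :=
  ⨅ b : {b : 𝕋 → ℂ // AEStronglyMeasurable b μ ∧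
      ∀ k : ℤ, 0 < k → fourierCoeff b k = fourierCoeff a k},
    multN NX NY b.1

/-- The Kuratowski measure of noncompactness of the set `A`, with diameters measured by `N`. -/
def setMNC (N : NormFn) (A : Set (𝕋 → ℂ)) : ℝ≥0∞ :=
  ⨅ d : {d : ℝ≥0∞ // ∃ (n : ℕ) (B : Fin n → Set (𝕋 → ℂ)),
      (∀ f ∈ A, ∃ i, f ∈ B i) ∧
      ∀ i, ∀ f ∈ B i, ∀ g ∈ B i, N (fun t => f t - g t) ≤ d}, d.1

/-- The decreasing rearrangement `f*` of `f`. -/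
def decRearr (f : 𝕋 → ℂ) (s : ℝ) : ℝ≥0∞ :=
  sInf {l : ℝ≥0∞ | μ {t | l < (‖f t‖₊ : ℝ≥0∞)} ≤ ENNReal.ofReal s}

/-- The Lorentz norm `‖f‖_{L^{p,q}}` on the circle (total measure 1). -/
def lorentzN (p q : ℝ≥0∞) : NormFn := fun f =>
  if q = ⊤ then ⨆ s : Set.Ioo (0 : ℝ) 1, decRearr f s.1 * ENNReal.ofReal (s.1 ^ (1 / p).toReal)
  else (∫⁻ s in Set.Ioo (0 : ℝ) 1,
      (decRearr f s * ENNReal.ofReal (s ^ (1 / p).toReal)) ^ q.toReal / ENNReal.ofReal s)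
    ^ (1 / q).toReal

/-- `dist_{L^{p,q}}(a, conj H^{p,q})` expressed via matching of positive Fourier coefficients. -/
def lorDist (p q : ℝ≥0∞) (a : 𝕋 → ℂ) : ℝ≥0∞ :=
  ⨅ b : {b : 𝕋 → ℂ // AEStronglyMeasurable b μ ∧
      ∀ k : ℤ, 0 < k → fourierCoeff b k = fourierCoeff a k},
    lorentzN p q b.1

/-- The analytic polynomial with coefficients `c 0, …, c n`. -/
def aPoly (n : ℕ) (c : ℕ → ℂ) : 𝕋 → ℂ := fun x =>
  ∑ k ∈ Finset.range (n + 1), c k * fourier (k : ℤ) x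

/-- The polynomial `p^c(t) = conj (p(1/t))`, i.e. with conjugated coefficients. -/
def aPolyC (n : ℕ) (c : ℕ → ℂ) : 𝕋 → ℂ := aPoly n fun k => (starRingEnd ℂ) (c k)

/-- A Banach function space over the circle, encoded by its norm functional. -/
structure BFS where
  N : NormFn
  ae_congr : ∀ f g, f =ᵐ[μ] g → N f = N g
  add_le : ∀ f g, N (f + g) ≤ N f + N g
  smul_eq : ∀ (c : ℂ) (f), N (fun t => c * f t) = (‖c‖₊ : ℝ≥0∞) * N f
  ideal : ∀ f g, AEStronglyMeasurable g μ → (∀ᵐ t ∂μ, ‖g t‖ ≤ ‖f t‖) → N g ≤ N f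
  const_finite : N (fun _ => 1) < ⊤
  norm_eq_zero : ∀ f, AEStronglyMeasurable f μ → N f = 0 → f =ᵐ[μ] fun _ => 0
  semiFatou : ∀ (f : ℕ → 𝕋 → ℂ) (g : 𝕋 → ℂ),
    (∀ n, AEStronglyMeasurable (f n) μ) → AEStronglyMeasurable g μ →
    (∀ᵐ t ∂μ, Monotone (fun n => ‖f n t‖) ∧
      Tendsto (fun n => ‖f n t‖) atTop (𝓝 ‖g t‖)) →
    N g < ⊤ → N g = ⨆ n, N (f n)
  complete : ∀ f : ℕ → 𝕋 → ℂ, (∀ n, AEStronglyMeasurable (f n) μ) →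
    (∑' n, N (f n)) < ⊤ →
    ∃ g, AEStronglyMeasurable g μ ∧ N g < ⊤ ∧
      Tendsto (fun n => N (fun t => g t - ∑ k ∈ Finset.range n, f k t)) atTop (𝓝 0)

/-- A quasi-Banach function space over the circle, with quasi-triangle constant `kappa`. -/
structure QBFS where
  N : NormFn
  kappa : ℝ≥0∞
  one_le_kappa : 1 ≤ kappa
  kappa_finite : kappa < ⊤
  ae_congr : ∀ f g, f =ᵐ[μ] g → N f = N g
  add_le : ∀ f g, N (f + g) ≤ kappa * (N f + N g)
  smul_eq : ∀ (c : ℂ) (f), N (fun t => c * f t) = (‖c‖₊ : ℝ≥0∞) * N f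
  ideal : ∀ f g, AEStronglyMeasurable g μ → (∀ᵐ t ∂μ, ‖g t‖ ≤ ‖f t‖) → N g ≤ N f
  const_finite : N (fun _ => 1) < ⊤
  norm_eq_zero : ∀ f, AEStronglyMeasurable f μ → N f = 0 → f =ᵐ[μ] fun _ => 0
  semiFatou : ∀ (f : ℕ → 𝕋 → ℂ) (g : 𝕋 → ℂ),
    (∀ n, AEStronglyMeasurable (f n) μ) → AEStronglyMeasurable g μ →
    (∀ᵐ t ∂μ, Monotone (fun n => ‖f n t‖) ∧
      Tendsto (fun n => ‖f n t‖) atTop (𝓝 ‖g t‖)) →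
    N g < ⊤ → N g = ⨆ n, N (f n)

/-- Rearrangement invariance of the norm functional `N`. -/
def RearrInvN (N : NormFn) : Prop :=
  ∀ f g, AEStronglyMeasurable f μ → AEStronglyMeasurable g μ →
    (∀ lam : ℝ, 0 < lam → μ {t | lam < ‖f t‖} = μ {t | lam < ‖g t‖}) →
    N f = N g

/-- `f` is an order continuous element of the space of `N`. -/
def OrderContElemN (N : NormFn) (f : 𝕋 → ℂ) : Prop :=
  MemN N f ∧ ∀ g : ℕ → 𝕋 → ℂ, (∀ n, AEStronglyMeasurable (g n) μ) →
    (∀ n, ∀ᵐ t ∂μ, ‖g n t‖ ≤ ‖f t‖) →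
    (∀ᵐ t ∂μ, Tendsto (fun n => ‖g n t‖) atTop (𝓝 0)) →
    Tendsto (fun n => N (g n)) atTop (𝓝 0)

/-- The space of `N` is order continuous (equivalently, separable). -/
def OrderContN (N : NormFn) : Prop :=
  ∀ f, MemN N f → OrderContElemN N f

/-- The Fatou property of the norm functional `N`. -/
def FatouN (N : NormFn) : Prop :=
  ∀ (f : ℕ → 𝕋 → ℂ) (g : 𝕋 → ℂ),
    (∀ n, AEStronglyMeasurable (f n) μ) → AEStronglyMeasurable g μ →
    (∀ᵐ t ∂μ, Monotone (fun n => ‖f n t‖) ∧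
      Tendsto (fun n => ‖f n t‖) atTop (𝓝 ‖g t‖)) →
    N g = ⨆ n, N (f n)


/-- Short name for the Haar measure, used in the proofs. -/
abbrev hm : Measure 𝕋 := AddCircle.haarAddCircle

/-- Integrable functions with vanishing negative Fourier coefficients. -/
def An (f : 𝕋 → ℂ) : Prop :=
  Integrable f hm ∧ ∀ n : ℕ, ∫ t, fourier ((n : ℤ) + 1) t * f t ∂hm = 0

lemma fourier_norm_apply (n : ℤ) (t : 𝕋) : ‖(fourier n t : ℂ)‖ = 1 := by
  rw [fourier_apply]; exact Circle.norm_coe _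

lemma memLp_fourier_mul {f : 𝕋 → ℂ} {p : ℝ≥0∞} (hf : MemLp f p hm) (n : ℤ) :
    MemLp (fun t => fourier n t * f t) p hm := by
  refine hf.of_le ((fourier n).continuous.aestronglyMeasurable.mul hf.1) ?_
  filter_upwards with t
  rw [norm_mul, fourier_norm_apply, one_mul]

lemma integrable_fourier_mul {f : 𝕋 → ℂ} (hf : Integrable f hm) (n : ℤ) :
    Integrable (fun t => fourier n t * f t) hm := by
  rw [← memLp_one_iff_integrable] at hf ⊢
  exact memLp_fourier_mul hf n

lemma An.congr {f g : 𝕋 → ℂ} (hf : An f) (h : f =ᵐ[hm] g) : An g := by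
  refine ⟨hf.1.congr h, fun n => ?_⟩
  rw [← hf.2 n]
  refine integral_congr_ae ?_
  filter_upwards [h] with t ht
  rw [ht]

lemma memLp_conj {f : 𝕋 → ℂ} (hf : MemLp f 2 hm) : MemLp (fun t => conj (f t)) 2 hm :=
  hf.star

lemma inner_toLp_eq {a b : 𝕋 → ℂ} (ha : MemLp a 2 hm) (hb : MemLp b 2 hm) :
    inner ℂ (ha.toLp a) (hb.toLp b) = ∫ t, conj (a t) * b t ∂hm := by
  rw [L2.inner_def]
  refine integral_congr_ae ?_
  filter_upwards [ha.coeFn_toLp, hb.coeFn_toLp] with t h1 h2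
  rw [h1, h2, RCLike.inner_apply, mul_comm]

lemma integrable_mul_L2 {a b : 𝕋 → ℂ} (ha : MemLp a 2 hm) (hb : MemLp b 2 hm) :
    Integrable (fun t => a t * b t) hm := ha.integrable_mul hb

/-- Uniqueness of Fourier coefficients for integrable functions. -/
lemma ae_zero_of_fourier {f : 𝕋 → ℂ} (hf : Integrable f hm)
    (h : ∀ n : ℤ, ∫ t, fourier n t * f t ∂hm = 0) : f =ᵐ[hm] 0 := by
  have hbd : ∀ g : C(𝕋, ℂ), Integrable (fun t => g t * f t) hm := fun g =>
    hf.bdd_mul g.continuous.aestronglyMeasurable (c := ‖g‖)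
      (Eventually.of_forall fun t => g.norm_coe_le_norm t)
  have hcont : ∀ g : C(𝕋, ℂ), ∫ t, g t * f t ∂hm = 0 := by
    let L : C(𝕋, ℂ) →ₗ[ℂ] ℂ :=
      { toFun := fun g => ∫ t, g t * f t ∂hm
        map_add' := fun g1 g2 => by
          rw [← integral_add (hbd g1) (hbd g2)]
          simp [add_mul]
        map_smul' := fun c g => by
          rw [RingHom.id_apply, smul_eq_mul, ← integral_const_mul]
          simp [mul_assoc] }
    let Lc : C(𝕋, ℂ) →L[ℂ] ℂ := L.mkContinuous (∫ t, ‖f t‖ ∂hm) (fun g => by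
      change ‖∫ t, g t * f t ∂hm‖ ≤ _
      rw [mul_comm (∫ t, ‖f t‖ ∂hm), ← integral_const_mul]
      refine norm_integral_le_of_norm_le (hf.norm.const_mul _) ?_
      filter_upwards with t
      rw [norm_mul]
      gcongr
      exact g.norm_coe_le_norm t)
    have hle : (Submodule.span ℂ (Set.range (@fourier (2 * Real.pi)))).topologicalClosure
        ≤ Lc.ker := by
      refine Submodule.topologicalClosure_minimal _ ?_ Lc.isClosed_ker
      rw [Submodule.span_le]
      rintro _ ⟨n, rfl⟩
      exact h n
    rw [span_fourier_closure_eq_top] at hle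
    intro g
    exact hle (Submodule.mem_top (x := g))
  refine ae_eq_zero_of_forall_setIntegral_isClosed_eq_zero hf fun s hs => ?_
  have hd : ∀ n : ℕ, (0 : ℝ) < 1 / ((n : ℝ) + 1) := fun n => Nat.one_div_pos_of_nat
  have hlim := thickenedIndicator_tendsto_indicator_closure hd
    tendsto_one_div_add_atTop_nhds_zero_nat s
  rw [tendsto_pi_nhds] at hlim
  have h1 : Tendsto (fun n : ℕ => ∫ t, ((thickenedIndicator (hd n) s t : ℝ) : ℂ) * f t ∂hm) atTop
      (𝓝 (∫ t, s.indicator f t ∂hm)) := by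
    refine tendsto_integral_of_dominated_convergence (fun t => ‖f t‖) ?_ hf.norm ?_ ?_
    · intro n
      refine AEStronglyMeasurable.mul (Continuous.aestronglyMeasurable ?_) hf.1
      have := (thickenedIndicator (hd n) s).continuous
      fun_prop
    · intro n
      filter_upwards with t
      rw [norm_mul]
      refine mul_le_of_le_one_left (norm_nonneg _) ?_
      simpa using thickenedIndicator_le_one (hd n) s t
    · filter_upwards with t
      have := hlim t
      have h2 : Tendsto (fun n : ℕ => ((thickenedIndicator (hd n) s t : ℝ) : ℂ) * f t) atTop
          (𝓝 (((((closure s).indicator (fun _ => (1 : NNReal)) t : NNReal) : ℝ) : ℂ) * f t)) := by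
        refine Tendsto.mul_const _ ?_
        exact (Complex.continuous_ofReal.tendsto _).comp
          ((NNReal.continuous_coe.tendsto _).comp this)
      convert h2 using 2
      rw [hs.closure_eq]
      by_cases hts : t ∈ s <;> simp [hts]
  have h2 : ∀ n : ℕ, ∫ t, ((thickenedIndicator (hd n) s t : ℝ) : ℂ) * f t ∂hm = 0 := by
    intro n
    have hc : Continuous fun t => ((thickenedIndicator (hd n) s t : ℝ) : ℂ) := by
      have := (thickenedIndicator (hd n) s).continuous
      fun_prop
    exact hcont ⟨_, hc⟩
  simp only [h2] at h1
  rw [← integral_indicator hs.measurableSet]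
  exact (tendsto_nhds_unique h1 tendsto_const_nhds)

/-- The product of two analytic `L²` functions is analytic. -/
lemma An.mul_L2 {a b : 𝕋 → ℂ} (ha : MemLp a 2 hm) (hb : MemLp b 2 hm) (hA : An a) (hB : An b) :
    An (fun t => a t * b t) := by
  refine ⟨integrable_mul_L2 ha hb, fun n => ?_⟩
  have hw := memLp_conj (memLp_fourier_mul ha ((n : ℤ) + 1))
  have key := (fourierBasis (T := 2 * Real.pi)).hasSum_inner_mul_inner (hw.toLp _) (hb.toLp _)
  have hF : ∀ i : ℤ, MemLp (fun t : 𝕋 => (fourier i t : ℂ)) 2 hm := fun i =>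
    (memLp_fourier_mul (memLp_const (1 : ℂ)) i).ae_eq (by simp)
  have hFe : ∀ i : ℤ, (fourierBasis (T := 2 * Real.pi)) i = (hF i).toLp _ := by
    intro i
    rw [coe_fourierBasis]
    refine Lp.ext ?_
    filter_upwards [coeFn_fourierLp (T := 2 * Real.pi) 2 i, (hF i).coeFn_toLp] with t h1 h2
    rw [h1, h2]
  have hz : ∀ i : ℤ, inner ℂ (hw.toLp _) ((fourierBasis (T := 2 * Real.pi)) i) *
      inner ℂ ((fourierBasis (T := 2 * Real.pi)) i) (hb.toLp _) = 0 := by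
    intro i
    rw [hFe, inner_toLp_eq, inner_toLp_eq]
    rcases le_or_gt 0 i with hi | hi
    · refine mul_eq_zero_of_left ?_ _
      lift i to ℕ using hi
      rw [← hA.2 (n + i)]
      refine integral_congr_ae (Eventually.of_forall fun t => ?_)
      have : (((n + i : ℕ) : ℤ) + 1) = ((n : ℤ) + 1) + i := by push_cast; ring
      simp only [this, fourier_add, Complex.conj_conj]
      ring
    · refine mul_eq_zero_of_right _ ?_
      obtain ⟨m, rfl⟩ : ∃ m : ℕ, i = -((m : ℤ) + 1) := ⟨(-i - 1).toNat, by omega⟩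
      rw [← hB.2 m]
      refine integral_congr_ae (Eventually.of_forall fun t => ?_)
      simp only [fourier_neg, Complex.conj_conj]
  simp only [hz] at key
  have := key.unique hasSum_zero
  rw [inner_toLp_eq] at this
  rw [← this]
  congr 1; ext t
  simp [mul_assoc]

/-- Core factorization: an orthogonal projection in `L²` produces the outer factor. -/
lemma factor_core {u k : 𝕋 → ℂ} (hu : MemLp u 2 hm) (hk : MemLp k 2 hm)
    (hA : An (fun t => u t * k t)) (h0 : ∫ t, u t * k t ∂hm ≠ 0) :
    ∃ U K : 𝕋 → ℂ, MemLp U 2 hm ∧ MemLp K 2 hm ∧ An U ∧ An K ∧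
      (∀ᵐ t ∂hm, u t * k t = U t * K t) ∧ (∀ᵐ t ∂hm, ‖U t‖ = ‖u t‖) ∧
      (∀ᵐ t ∂hm, ‖K t‖ = ‖k t‖) := by
  have he : ∀ n : ℕ, MemLp (fun t => fourier (n : ℤ) t * u t) 2 hm :=
    fun n => memLp_fourier_mul hu n
  let e : ℕ → Lp ℂ 2 hm := fun n => (he n).toLp _
  let M : Submodule ℂ (Lp ℂ 2 hm) :=
    (Submodule.span ℂ (Set.range fun n : ℕ => e (n + 1))).topologicalClosure
  have hMc : IsClosed (M : Set (Lp ℂ 2 hm)) := Submodule.isClosed_topologicalClosure _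
  have : CompleteSpace M := hMc.completeSpace_coe
  let M0 : Submodule ℂ (Lp ℂ 2 hm) :=
    (Submodule.span ℂ (Set.range e)).topologicalClosure
  have heM : ∀ n, e (n + 1) ∈ M := fun n =>
    Submodule.le_topologicalClosure _ (Submodule.subset_span ⟨n, rfl⟩)
  have heM0 : ∀ n, e n ∈ M0 := fun n =>
    Submodule.le_topologicalClosure _ (Submodule.subset_span ⟨n, rfl⟩)
  have hMM0 : M ≤ M0 := by
    refine Submodule.topologicalClosure_mono (Submodule.span_mono ?_)
    rintro _ ⟨n, rfl⟩
    exact ⟨n + 1, rfl⟩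
  -- orthogonality passes to closed spans
  have orth : ∀ (w : Lp ℂ 2 hm) (v : ℕ → Lp ℂ 2 hm), (∀ n, inner ℂ w (v n) = 0) →
      ∀ x ∈ (Submodule.span ℂ (Set.range v)).topologicalClosure, inner ℂ w x = 0 := by
    intro w v hv x hx
    have hle : (Submodule.span ℂ (Set.range v)).topologicalClosure ≤
        (innerSL ℂ w : Lp ℂ 2 hm →L[ℂ] ℂ).ker := by
      refine Submodule.topologicalClosure_minimal _ ?_
        (innerSL ℂ w : Lp ℂ 2 hm →L[ℂ] ℂ).isClosed_ker
      rw [Submodule.span_le]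
      rintro _ ⟨n, rfl⟩
      exact hv n
    exact hle hx
  let P : Lp ℂ 2 hm := M.starProjection (e 0)
  have hPM : P ∈ M := Submodule.starProjection_apply_mem _ _
  let g : Lp ℂ 2 hm := e 0 - P
  have hgM0 : g ∈ M0 := M0.sub_mem (heM0 0) (hMM0 hPM)
  have hgorth : ∀ x ∈ M, inner ℂ g x = 0 := fun x hx =>
    Submodule.starProjection_inner_eq_zero _ _ hx
  have hgL : MemLp (g : 𝕋 → ℂ) 2 hm := Lp.memLp g
  have hgto : hgL.toLp _ = g := Lp.toLp_coeFn g hgL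
  -- nontriviality
  have hg0 : g ≠ 0 := by
    intro hg
    have he0 : e 0 ∈ M := by
      have : e 0 = P := sub_eq_zero.mp hg
      rw [this]; exact hPM
    have h1 := orth ((memLp_conj hk).toLp _) (fun n => e (n + 1)) (fun n => by
      rw [inner_toLp_eq, ← hA.2 n]
      refine integral_congr_ae (Eventually.of_forall fun t => ?_)
      simp only [Complex.conj_conj, Nat.cast_add, Nat.cast_one]
      ring) _ he0
    rw [inner_toLp_eq] at h1
    apply h0
    rw [← h1]
    refine integral_congr_ae (Eventually.of_forall fun t => ?_)
    simp [mul_comm]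
  have hge : ∀ n : ℕ, ∫ t, conj (g t) * (fourier ((n : ℤ) + 1) t * u t) ∂hm = 0 := by
    intro n
    have h1 := hgorth _ (heM n)
    rw [← hgto, inner_toLp_eq] at h1
    rw [← h1]
    simp
  have hgg : Integrable (fun t => conj (g t) * g t) hm :=
    integrable_mul_L2 (memLp_conj hgL) hgL
  -- `|g|²` has vanishing positive coefficients
  have hpos : ∀ n : ℕ, ∫ t, fourier ((n : ℤ) + 1) t * (conj (g t) * g t) ∂hm = 0 := by
    intro n
    have h1 := orth ((memLp_conj (memLp_fourier_mul (memLp_conj hgL) ((n : ℤ) + 1))).toLp _) e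
      (fun m => by
        rw [inner_toLp_eq, ← hge (n + m)]
        refine integral_congr_ae (Eventually.of_forall fun t => ?_)
        have : (((n + m : ℕ) : ℤ) + 1) = ((n : ℤ) + 1) + m := by push_cast; ring
        simp only [this, fourier_add, Complex.conj_conj]
        ring) (hgL.toLp _) (by rw [hgto]; exact hgM0)
    rw [inner_toLp_eq] at h1
    rw [← h1]
    refine integral_congr_ae (Eventually.of_forall fun t => ?_)
    simp only [Complex.conj_conj]
    ring
  have hneg : ∀ n : ℕ, ∫ t, fourier (-((n : ℤ) + 1)) t * (conj (g t) * g t) ∂hm = 0 := by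
    intro n
    have h1 := congrArg conj (hpos n)
    rw [← integral_conj, map_zero] at h1
    rw [← h1]
    refine integral_congr_ae (Eventually.of_forall fun t => ?_)
    simp only [fourier_neg, map_mul, Complex.conj_conj]
    ring
  let c : ℝ := ‖g‖ ^ 2
  have hc : 0 < c := by positivity
  have hcint : ∫ t, conj (g t) * g t ∂hm = (c : ℂ) := by
    have := inner_self_eq_norm_sq_to_K (𝕜 := ℂ) g
    rw [← hgto, inner_toLp_eq, hgto] at this
    rw [this]
    simp [c]
  have hconst : ∀ᵐ t ∂hm, conj (g t) * g t = (c : ℂ) := by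
    have h1 : (fun t => conj (g t) * g t - (c : ℂ)) =ᵐ[hm] 0 := by
      refine ae_zero_of_fourier (hgg.sub (integrable_const _)) fun n => ?_
      have hsplit : ∫ t, fourier n t * (conj (g t) * g t - (c : ℂ)) ∂hm =
          ∫ t, fourier n t * (conj (g t) * g t) ∂hm - (∫ t, fourier n t ∂hm) * c := by
        rw [← integral_mul_const, ← integral_sub (integrable_fourier_mul hgg n)
          (integrable_fourier_mul (integrable_const _) n)]
        simp only [mul_sub]
      rw [hsplit]
      have hF : n ≠ 0 → ∫ t, (fourier n t : ℂ) ∂hm = 0 := by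
        intro hn
        have := orthonormal_fourier (T := 2 * Real.pi) |>.2 (i := -n) (j := 0) (by simpa using hn)
        have h2 := congrFun (fourierCoeff_fourier (T := 2 * Real.pi) 0) (-n)
        simpa [fourierCoeff, hn] using h2
      rcases lt_trichotomy n 0 with hn | rfl | hn
      · obtain ⟨m, rfl⟩ : ∃ m : ℕ, n = -((m : ℤ) + 1) := ⟨(-n - 1).toNat, by omega⟩
        rw [hneg, hF hn.ne]; simp
      · simp [hcint]
      · obtain ⟨m, rfl⟩ : ∃ m : ℕ, n = (m : ℤ) + 1 := ⟨(n - 1).toNat, by omega⟩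
        rw [hpos, hF (ne_of_gt hn)]; simp
    filter_upwards [h1] with t ht
    exact sub_eq_zero.mp ht
  let s : ℝ := (‖g‖)⁻¹
  have hs : ((s : ℂ) * s) * c = 1 := by
    have : ‖g‖ ≠ 0 := norm_ne_zero_iff.mpr hg0
    norm_cast
    simp only [s, c]
    field_simp
  have hsn : ∀ᵐ t ∂hm, ‖(s : ℂ) * g t‖ = 1 := by
    filter_upwards [hconst] with t ht
    have h1 : ‖g t‖ * ‖g t‖ = c := by
      have := congrArg norm ht
      simpa [abs_of_pos hc] using this
    have h2 : ‖g t‖ = ‖g‖ := by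
      rw [← abs_of_nonneg (norm_nonneg (g t)), ← abs_of_nonneg (norm_nonneg g), ← sq_eq_sq_iff_abs_eq_abs]
      rw [sq, h1]
    have : ‖g‖ ≠ 0 := norm_ne_zero_iff.mpr hg0
    rw [norm_mul, h2]
    simp [s, this]
  have hUn : ∀ᵐ t ∂hm, ‖u t * conj ((s : ℂ) * g t)‖ = ‖u t‖ := by
    filter_upwards [hsn] with t ht
    rw [norm_mul, RCLike.norm_conj, ht, mul_one]
  have hKn : ∀ᵐ t ∂hm, ‖k t * ((s : ℂ) * g t)‖ = ‖k t‖ := by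
    filter_upwards [hsn] with t ht
    rw [norm_mul, ht, mul_one]
  have hsg : MemLp (fun t => (s : ℂ) * g t) 2 hm := hgL.const_mul _
  have hUL : MemLp (fun t => u t * conj ((s : ℂ) * g t)) 2 hm :=
    hu.of_le (hu.1.mul (memLp_conj hsg).1) (hUn.mono fun t ht => ht.le)
  have hKL : MemLp (fun t => k t * ((s : ℂ) * g t)) 2 hm :=
    hk.of_le (hk.1.mul hsg.1) (hKn.mono fun t ht => ht.le)
  refine ⟨_, _, hUL, hKL, ⟨hUL.integrable (by norm_num), fun n => ?_⟩,
    ⟨hKL.integrable (by norm_num), fun n => ?_⟩, ?_, hUn, hKn⟩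
  · have h1 := hge n
    rw [← mul_zero (s : ℂ), ← h1, ← integral_const_mul]
    refine integral_congr_ae (Eventually.of_forall fun t => ?_)
    simp only [map_mul, Complex.conj_ofReal]
    ring
  · have h1 := orth ((memLp_conj (memLp_fourier_mul hk ((n : ℤ) + 1))).toLp _) e
      (fun m => by
        rw [inner_toLp_eq, ← hA.2 (n + m)]
        refine integral_congr_ae (Eventually.of_forall fun t => ?_)
        have : (((n + m : ℕ) : ℤ) + 1) = ((n : ℤ) + 1) + m := by push_cast; ring
        simp only [this, fourier_add, Complex.conj_conj]
        ring) (hgL.toLp _) (by rw [hgto]; exact hgM0)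
    rw [inner_toLp_eq] at h1
    rw [← mul_zero (s : ℂ), ← h1, ← integral_const_mul]
    refine integral_congr_ae (Eventually.of_forall fun t => ?_)
    simp only [Complex.conj_conj]
    ring
  · filter_upwards [hconst] with t ht
    calc u t * k t = (u t * k t) * (((s : ℂ) * s) * c) := by rw [hs, mul_one]
      _ = _ := by rw [← ht, map_mul, Complex.conj_ofReal]; ring

lemma An.fourier_mul {f : 𝕋 → ℂ} (hf : An f) (m : ℕ) :
    An (fun t => fourier (m : ℤ) t * f t) := by
  refine ⟨integrable_fourier_mul hf.1 _, fun n => ?_⟩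
  rw [← hf.2 (n + m)]
  refine integral_congr_ae (Eventually.of_forall fun t => ?_)
  have : (((n + m : ℕ) : ℤ) + 1) = ((n : ℤ) + 1) + m := by push_cast; ring
  simp only [this, fourier_add]
  ring

lemma An.zero : An (fun _ => 0) := ⟨integrable_zero _ _ _, fun n => by simp⟩

/-- Splitting lemma: an analytic function dominated by a product of two `L²` functions is a
product of two analytic functions dominated by these. -/
lemma split_lemma {h : 𝕋 → ℂ} (hA : An h) {u v : 𝕋 → ℝ} (hu : MemLp u 2 hm) (hv : MemLp v 2 hm)
    (hu0 : ∀ t, 0 ≤ u t) (hv0 : ∀ t, 0 ≤ v t) (huv : ∀ᵐ t ∂hm, ‖h t‖ ≤ u t * v t) :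
    ∃ U K : 𝕋 → ℂ, MemLp U 2 hm ∧ MemLp K 2 hm ∧ An U ∧ An K ∧
      (∀ᵐ t ∂hm, h t = U t * K t) ∧ (∀ᵐ t ∂hm, ‖U t‖ ≤ u t) ∧ (∀ᵐ t ∂hm, ‖K t‖ ≤ v t) := by
  classical
  by_cases hz : h =ᵐ[hm] 0
  · refine ⟨fun _ => 0, fun _ => 0, MemLp.zero, MemLp.zero, An.zero, An.zero, ?_, ?_, ?_⟩
    · filter_upwards [hz] with t ht
      simpa using ht
    · filter_upwards with t; simpa using hu0 t
    · filter_upwards with t; simpa using hv0 t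
  have hex : ∃ m : ℕ, ∫ t, fourier (-(m : ℤ)) t * h t ∂hm ≠ 0 := by
    by_contra! hcon
    refine hz (ae_zero_of_fourier hA.1 fun n => ?_)
    rcases le_or_gt n 0 with hn | hn
    · obtain ⟨m, rfl⟩ : ∃ m : ℕ, n = -(m : ℤ) := ⟨(-n).toNat, by omega⟩
      exact hcon m
    · obtain ⟨m, rfl⟩ : ∃ m : ℕ, n = (m : ℤ) + 1 := ⟨(n - 1).toNat, by omega⟩
      exact hA.2 m
  obtain ⟨m, hm1, hm2⟩ : ∃ m : ℕ, ∫ t, fourier (-(m : ℤ)) t * h t ∂hm ≠ 0 ∧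
      ∀ j : ℕ, j < m → ∫ t, fourier (-(j : ℤ)) t * h t ∂hm = 0 :=
    ⟨Nat.find hex, Nat.find_spec hex, fun j hj => by simpa using Nat.find_min hex hj⟩
  let k : 𝕋 → ℂ := fun t => fourier (-(m : ℤ)) t * (h t / (u t : ℂ))
  have huC : MemLp (fun t => (u t : ℂ)) 2 hm := hu.ofReal
  have hkn : ∀ᵐ t ∂hm, ‖k t‖ ≤ v t := by
    filter_upwards [huv] with t ht
    simp only [k, norm_mul, fourier_norm_apply, one_mul, norm_div, Complex.norm_real,
      Real.norm_eq_abs, abs_of_nonneg (hu0 t)]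
    rcases (hu0 t).eq_or_lt with h0 | h0
    · rw [← h0]; simpa using hv0 t
    · rw [div_le_iff₀ h0, mul_comm]; exact ht
  have hkL : MemLp k 2 hm := by
    refine hv.of_le ?_ ?_
    · exact (fourier _).continuous.aestronglyMeasurable.mul
        (hA.1.1.aemeasurable.div huC.1.aemeasurable).aestronglyMeasurable
    · filter_upwards [hkn] with t ht
      rwa [Real.norm_of_nonneg (hv0 t)]
  have huk : ∀ᵐ t ∂hm, fourier (-(m : ℤ)) t * h t = (u t : ℂ) * k t := by
    filter_upwards [huv] with t ht
    simp only [k]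
    rcases (hu0 t).eq_or_lt with h0 | h0
    · rw [← h0, zero_mul] at ht
      have : h t = 0 := norm_le_zero_iff.mp ht
      simp [this]
    · have : (u t : ℂ) ≠ 0 := by exact_mod_cast (ne_of_gt h0)
      field_simp
  have hA1 : An (fun t => fourier (-(m : ℤ)) t * h t) := by
    refine ⟨integrable_fourier_mul hA.1 _, fun n => ?_⟩
    have heq : ∀ t, fourier ((n : ℤ) + 1) t * (fourier (-(m : ℤ)) t * h t) =
        fourier ((n : ℤ) + 1 - m) t * h t := by
      intro t
      rw [sub_eq_add_neg, fourier_add (m := (n : ℤ) + 1)]; ring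
    simp only [heq]
    rcases lt_or_ge n m with hnm | hnm
    · obtain ⟨j, hj⟩ : ∃ j : ℕ, (n : ℤ) + 1 - m = -(j : ℤ) := ⟨m - (n + 1), by omega⟩
      rw [hj]; exact hm2 j (by omega)
    · obtain ⟨j, hj⟩ : ∃ j : ℕ, (n : ℤ) + 1 - m = (j : ℤ) + 1 := ⟨n - m, by omega⟩
      rw [hj]; exact hA.2 j
  obtain ⟨U, K, hU, hK, hUA, hKA, hUK, hUn, hKn⟩ := factor_core huC hkL (hA1.congr huk)
    (by rwa [← integral_congr_ae huk])
  refine ⟨U, fun t => fourier (m : ℤ) t * K t, hU, memLp_fourier_mul hK _, hUA,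
    hKA.fourier_mul m, ?_, ?_, ?_⟩
  · filter_upwards [hUK, huk] with t h1 h2
    have h3 : fourier (m : ℤ) t * fourier (-(m : ℤ)) t = (1 : ℂ) := by
      rw [← fourier_add]; simp
    calc h t = fourier (m : ℤ) t * fourier (-(m : ℤ)) t * h t := by rw [h3, one_mul]
      _ = fourier (m : ℤ) t * (U t * K t) := by rw [mul_assoc, h2, h1]
      _ = _ := by ring
  · filter_upwards [hUn] with t ht
    rw [ht]; simp [abs_of_nonneg (hu0 t)]
  · filter_upwards [hKn, hkn] with t h1 h2
    rw [norm_mul, fourier_norm_apply, one_mul, h1]; exact h2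

lemma memLp_sqrt_norm {f : 𝕋 → ℂ} (hf : Integrable f hm) :
    MemLp (fun t => Real.sqrt ‖f t‖) 2 hm := by
  have hmeas : AEStronglyMeasurable (fun t => Real.sqrt ‖f t‖) hm :=
    Real.continuous_sqrt.comp_aestronglyMeasurable hf.1.norm
  rw [memLp_two_iff_integrable_sq hmeas]
  refine hf.norm.congr (Eventually.of_forall fun t => ?_)
  exact (Real.sq_sqrt (norm_nonneg _)).symm

/-- If two analytic integrable functions have an integrable product, the product is analytic. -/
lemma An.mul {f g : 𝕋 → ℂ} (hf : An f) (hg : An g) (hfg : Integrable (fun t => f t * g t) hm) :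
    An (fun t => f t * g t) := by
  obtain ⟨F1, K1, hF1, hK1, hF1A, hK1A, h1, hF1n, hK1n⟩ := split_lemma hf (memLp_sqrt_norm hf.1)
    (memLp_sqrt_norm hf.1) (fun t => Real.sqrt_nonneg _) (fun t => Real.sqrt_nonneg _)
    (Eventually.of_forall fun t => (Real.mul_self_sqrt (norm_nonneg _)).ge)
  obtain ⟨F2, K2, hF2, hK2, hF2A, hK2A, h2, hF2n, hK2n⟩ := split_lemma hg (memLp_sqrt_norm hg.1)
    (memLp_sqrt_norm hg.1) (fun t => Real.sqrt_nonneg _) (fun t => Real.sqrt_nonneg _)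
    (Eventually.of_forall fun t => (Real.mul_self_sqrt (norm_nonneg _)).ge)
  have aux : ∀ {a b : 𝕋 → ℂ}, MemLp a 2 hm → MemLp b 2 hm →
      (∀ᵐ t ∂hm, ‖a t‖ ≤ Real.sqrt ‖f t‖) → (∀ᵐ t ∂hm, ‖b t‖ ≤ Real.sqrt ‖g t‖) →
      MemLp (fun t => a t * b t) 2 hm := by
    intro a b ha hb han hbn
    refine (memLp_sqrt_norm hfg).of_le (ha.1.mul hb.1) ?_
    filter_upwards [han, hbn] with t h1 h2
    rw [Real.norm_of_nonneg (Real.sqrt_nonneg _), norm_mul, norm_mul,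
      Real.sqrt_mul (norm_nonneg _)]
    gcongr
  have hA := An.mul_L2 (aux hF1 hF2 hF1n hF2n) (aux hK1 hK2 hK1n hK2n)
    (An.mul_L2 hF1 hF2 hF1A hF2A) (An.mul_L2 hK1 hK2 hK1A hK2A)
  refine hA.congr ?_
  filter_upwards [h1, h2] with t e1 e2
  rw [e1, e2]; ring

/-- Analytic factorization of an analytic function which is a product of integrable functions. -/
lemma An.factor {h f g : 𝕋 → ℂ} (hA : An h) (hf : Integrable f hm) (hg : Integrable g hm)
    (hfg : ∀ᵐ t ∂hm, h t = f t * g t) :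
    ∃ F G : 𝕋 → ℂ, An F ∧ An G ∧ (∀ᵐ t ∂hm, h t = F t * G t) ∧
      (∀ᵐ t ∂hm, ‖F t‖ ≤ ‖f t‖) ∧ (∀ᵐ t ∂hm, ‖G t‖ ≤ ‖g t‖) := by
  obtain ⟨P, Q, hP, hQ, hPA, hQA, hPQ, hPn, hQn⟩ := split_lemma hA (memLp_sqrt_norm hA.1)
    (memLp_sqrt_norm hA.1) (fun t => Real.sqrt_nonneg _) (fun t => Real.sqrt_nonneg _)
    (Eventually.of_forall fun t => (Real.mul_self_sqrt (norm_nonneg _)).ge)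
  have aux : ∀ {a : 𝕋 → ℂ}, (∀ᵐ t ∂hm, ‖a t‖ ≤ Real.sqrt ‖h t‖) →
      ∀ᵐ t ∂hm, ‖a t‖ ≤ Real.sqrt ‖f t‖ * Real.sqrt ‖g t‖ := by
    intro a ha
    filter_upwards [ha, hfg] with t h1 h2
    rwa [← Real.sqrt_mul (norm_nonneg _), ← norm_mul, ← h2]
  obtain ⟨A, B, hAL, hBL, hAA, hBA, h1, hAn, hBn⟩ := split_lemma hPA (memLp_sqrt_norm hf)
    (memLp_sqrt_norm hg) (fun t => Real.sqrt_nonneg _) (fun t => Real.sqrt_nonneg _) (aux hPn)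
  obtain ⟨C, D, hCL, hDL, hCA, hDA, h2, hCn, hDn⟩ := split_lemma hQA (memLp_sqrt_norm hf)
    (memLp_sqrt_norm hg) (fun t => Real.sqrt_nonneg _) (fun t => Real.sqrt_nonneg _) (aux hQn)
  refine ⟨_, _, An.mul_L2 hAL hCL hAA hCA, An.mul_L2 hBL hDL hBA hDA, ?_, ?_, ?_⟩
  · filter_upwards [hPQ, h1, h2] with t e0 e1 e2
    rw [e0, e1, e2]; ring
  · filter_upwards [hAn, hCn] with t e1 e2
    rw [norm_mul, ← Real.mul_self_sqrt (norm_nonneg (f t))]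
    gcongr
  · filter_upwards [hBn, hDn] with t e1 e2
    rw [norm_mul, ← Real.mul_self_sqrt (norm_nonneg (g t))]
    gcongr

lemma An_iff {f : 𝕋 → ℂ} (hf : Integrable f μ) :
    An f ↔ ∀ n : ℤ, n < 0 → fourierCoeff f n = 0 := by
  constructor
  · intro h n hn
    obtain ⟨m, rfl⟩ : ∃ m : ℕ, n = -((m : ℤ) + 1) := ⟨(-n - 1).toNat, by omega⟩
    rw [fourierCoeff, neg_neg]
    exact h.2 m
  · intro h
    refine ⟨hf, fun m => ?_⟩
    have := h (-((m : ℤ) + 1)) (by omega)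
    rw [fourierCoeff, neg_neg] at this
    exact this

lemma BFS.N_zero (X : BFS) : X.N (fun _ => 0) = 0 := by
  have := X.smul_eq 0 (fun _ => 0)
  simpa using this

lemma hardy_zero (X : BFS) : HardyMemN X.N (fun _ => 0) := by
  refine ⟨aestronglyMeasurable_const, by rw [X.N_zero]; exact ENNReal.zero_lt_top, fun n _ => ?_⟩
  simp [fourierCoeff]

/-- Every finite-norm factorization of an analytic function can be replaced by an analytic one. -/
lemma hardy_factor (X Y : BFS)
    (hprod : ∀ f g, MemN X.N f → MemN Y.N g → Integrable (fun t => f t * g t) μ)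
    {h f g : 𝕋 → ℂ} (hneg : ∀ n : ℤ, n < 0 → fourierCoeff h n = 0)
    (hf : AEStronglyMeasurable f μ) (hg : AEStronglyMeasurable g μ)
    (hfg : h =ᵐ[μ] fun t => f t * g t) (hfin : X.N f * Y.N g < ⊤) :
    ∃ F G, HardyMemN X.N F ∧ HardyMemN Y.N G ∧ (h =ᵐ[μ] fun t => F t * G t) ∧
      X.N F * Y.N G ≤ X.N f * Y.N g := by
  by_cases hz : h =ᵐ[μ] fun _ => 0
  · refine ⟨fun _ => 0, fun _ => 0, hardy_zero X, hardy_zero Y, ?_, ?_⟩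
    · simpa using hz
    · rw [X.N_zero]; simp
  have hf0 : X.N f ≠ 0 := by
    intro h0
    apply hz
    filter_upwards [hfg, X.norm_eq_zero f hf h0] with t h1 h2
    rw [h1, h2, zero_mul]
  have hg0 : Y.N g ≠ 0 := by
    intro h0
    apply hz
    filter_upwards [hfg, Y.norm_eq_zero g hg h0] with t h1 h2
    rw [h1, h2, mul_zero]
  have hfX : MemN X.N f := ⟨hf, ENNReal.lt_top_of_mul_ne_top_left hfin.ne hg0⟩
  have hgY : MemN Y.N g := ⟨hg, ENNReal.lt_top_of_mul_ne_top_right hfin.ne hf0⟩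
  have h1X : MemN X.N (fun _ => 1) := ⟨aestronglyMeasurable_const, X.const_finite⟩
  have h1Y : MemN Y.N (fun _ => 1) := ⟨aestronglyMeasurable_const, Y.const_finite⟩
  have hfI : Integrable f μ := by simpa using hprod f _ hfX h1Y
  have hgI : Integrable g μ := by simpa using hprod _ g h1X hgY
  have hhI : Integrable h μ := (hprod f g hfX hgY).congr hfg.symm
  obtain ⟨F, G, hF, hG, hFG, hFn, hGn⟩ := An.factor ((An_iff hhI).2 hneg) hfI hgI hfg
  have hXF : X.N F ≤ X.N f := X.ideal f F hF.1.1 hFn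
  have hYG : Y.N G ≤ Y.N g := Y.ideal g G hG.1.1 hGn
  exact ⟨F, G, ⟨hF.1.1, hXF.trans_lt hfX.2, (An_iff hF.1).1 hF⟩,
    ⟨hG.1.1, hYG.trans_lt hgY.2, (An_iff hG.1).1 hG⟩, hFG, mul_le_mul' hXF hYG⟩

/-- **Product of Hardy spaces.** If `X, Y` are rearrangement-invariant Banach
function spaces over `𝕋` with `X ⊙ Y ⊂ L¹`, then `H[X] ⊙ H[Y] = H[X ⊙ Y]` with equality
of (quasi-)norms. -/
theorem hardy_product_theorem (X Y : BFS) (hriX : RearrInvN X.N) (hriY : RearrInvN Y.N)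
    (hprod : ∀ f g, MemN X.N f → MemN Y.N g → Integrable (fun t => f t * g t) μ) :
    (∀ h, AEStronglyMeasurable h μ →
      ((∃ f g, HardyMemN X.N f ∧ HardyMemN Y.N g ∧ h =ᵐ[μ] fun t => f t * g t) ↔
        (prodN X.N Y.N h < ⊤ ∧ ∀ n : ℤ, n < 0 → fourierCoeff h n = 0))) ∧
    (∀ h, AEStronglyMeasurable h μ → (∀ n : ℤ, n < 0 → fourierCoeff h n = 0) →
      (⨅ p : {p : (𝕋 → ℂ) × (𝕋 → ℂ) // HardyMemN X.N p.1 ∧ HardyMemN Y.N p.2 ∧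
          h =ᵐ[μ] fun t => p.1 t * p.2 t}, X.N p.1.1 * Y.N p.1.2)
        = prodN X.N Y.N h) := by
  constructor
  · intro h hh
    constructor
    · rintro ⟨f, g, hf, hg, hfg⟩
      constructor
      · refine lt_of_le_of_lt (iInf_le _ ⟨(f, g), hf.1, hg.1, hfg⟩) ?_
        exact ENNReal.mul_lt_top hf.2.1 hg.2.1
      · have h1X : MemN X.N (fun _ => 1) := ⟨aestronglyMeasurable_const, X.const_finite⟩
        have h1Y : MemN Y.N (fun _ => 1) := ⟨aestronglyMeasurable_const, Y.const_finite⟩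
        have hfX : MemN X.N f := ⟨hf.1, hf.2.1⟩
        have hgY : MemN Y.N g := ⟨hg.1, hg.2.1⟩
        have hfI : Integrable f μ := by simpa using hprod f _ hfX h1Y
        have hgI : Integrable g μ := by simpa using hprod _ g h1X hgY
        have hI := hprod f g hfX hgY
        have hA := An.mul ((An_iff hfI).2 hf.2.2) ((An_iff hgI).2 hg.2.2) hI
        exact (An_iff (hI.congr hfg.symm)).1 (hA.congr hfg.symm)
    · rintro ⟨hfin, hneg⟩
      obtain ⟨⟨⟨f, g⟩, hf, hg, hfg⟩, hlt⟩ := iInf_lt_iff.1 hfin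
      obtain ⟨F, G, hF, hG, hFG, -⟩ := hardy_factor X Y hprod hneg hf hg hfg hlt
      exact ⟨F, G, hF, hG, hFG⟩
  · intro h hh hneg
    apply le_antisymm
    · refine le_iInf ?_
      rintro ⟨⟨f, g⟩, hf, hg, hfg⟩
      rcases eq_or_ne (X.N f * Y.N g) ⊤ with htop | htop
      · simp only [htop]; exact le_top
      · obtain ⟨F, G, hF, hG, hFG, hle⟩ :=
          hardy_factor X Y hprod hneg hf hg hfg (lt_top_iff_ne_top.2 htop)
        exact (iInf_le _ ⟨(F, G), hF, hG, hFG⟩).trans hle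
    · refine le_iInf ?_
      rintro ⟨⟨f, g⟩, hf, hg, hfg⟩
      exact iInf_le_of_le ⟨(f, g), hf.1, hg.1, hfg⟩ le_rfl
end
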